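/- arXiv:2108.13968 — 3 statements merged into one kernel-verified Lean document; each statement's English description precedes it below -/
import Mathlib

section
/- Let Σ = {1,…,σ} and B_k = (1·2···σ)^k. A word v over Σ is a shortest absent subsequence of B_k if and only if v is a non-increasing sequence of length k+1, i.e., |v| = k+1 and v[i] ≥ v[i+1] for all 1 ≤ i ≤ k. -/
/-!
The word `B_k` consists of `k` strictly increasing blocks, each containing every letter. A
non-increasing word uses at most one letter from each block, so it embeds in `B_k` only if its
length is at most `k` (`length_le_of_isChain_ge`). Conversely, embedding one letter per block
realises every word of length at most `k` (`sublist_Bword_of_length_le`), and a strict ascent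
`a < b` places two consecutive letters in a single block, which gains one letter
(`sublist_Bword_of_not_isChain`). Hence the shortest absent subsequences have length `k + 1`
(the constant word `1^(k+1)` is absent), and a word of that length is absent iff it has no
strict ascent.
-/

/-- The word `1·2···σ` over the alphabet `Σ = {1,…,σ} ⊆ ℕ`. -/
def ascWord (σ : ℕ) : List ℕ := (List.range σ).map (· + 1)

/-- The word `B_k = (1·2···σ)^k`. -/
def Bword (σ k : ℕ) : List ℕ := (List.replicate k (ascWord σ)).flatten

/-- `v` is a shortest absent subsequence (SAS) of `w`: `v` is a word over `alph(w)`
which is not a subsequence of `w`, of minimal length with this property. -/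
def IsSAS (w v : List ℕ) : Prop :=
  (∀ a ∈ v, a ∈ w) ∧ ¬ v.Sublist w ∧
    ∀ u : List ℕ, (∀ a ∈ u, a ∈ w) → ¬ u.Sublist w → v.length ≤ u.length

lemma mem_ascWord {σ a : ℕ} : a ∈ ascWord σ ↔ 1 ≤ a ∧ a ≤ σ := by
  simp only [ascWord, List.mem_map, List.mem_range]
  constructor
  · rintro ⟨b, hb, rfl⟩
    omega
  · rintro ⟨h1, h2⟩
    exact ⟨a - 1, by omega, by omega⟩

lemma pairwise_ascWord (σ : ℕ) : (ascWord σ).Pairwise (· < ·) := by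
  rw [ascWord, List.pairwise_map]
  exact List.pairwise_lt_range.imp (by omega)

lemma Bword_succ (σ k : ℕ) : Bword σ (k + 1) = ascWord σ ++ Bword σ k := by
  simp [Bword, List.replicate_succ]

lemma mem_Bword {σ k a : ℕ} (hk : 1 ≤ k) : a ∈ Bword σ k ↔ 1 ≤ a ∧ a ≤ σ := by
  rw [← mem_ascWord, Bword, List.mem_flatten]
  constructor
  · rintro ⟨l, hl, ha⟩
    rwa [List.eq_of_mem_replicate hl] at ha
  · intro ha
    exact ⟨_, List.mem_replicate.2 ⟨by omega, rfl⟩, ha⟩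

lemma pair_sublist_ascWord {σ a b : ℕ} (ha : 1 ≤ a) (hab : a < b) (hb : b ≤ σ) :
    [a, b].Sublist (ascWord σ) := by
  refine List.sublist_of_subperm_of_pairwise (r := (· < ·)) ?_ (by simpa using hab)
    (pairwise_ascWord σ)
  refine List.subperm_of_subset (by simpa using hab.ne) ?_
  intro x hx
  simp only [List.mem_cons, List.not_mem_nil, or_false] at hx
  rw [mem_ascWord]
  omega

/-- `B_k` is `k`-universal. -/
lemma sublist_Bword_of_length_le {σ : ℕ} (k : ℕ) (v : List ℕ)
    (hv : ∀ a ∈ v, 1 ≤ a ∧ a ≤ σ) (hl : v.length ≤ k) : v.Sublist (Bword σ k) := by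
  induction k generalizing v with
  | zero => simp_all
  | succ k ih =>
    cases v with
    | nil => simp
    | cons a t =>
      rw [List.forall_mem_cons] at hv
      rw [Bword_succ, ← List.singleton_append]
      exact (List.singleton_sublist.2 (mem_ascWord.2 hv.1)).append
        (ih t hv.2 (by simpa using hl))

/-- A strict ascent lets two letters share a block, so words having one embed in `B_k` even when
their length is `k + 1`. -/
lemma sublist_Bword_of_not_isChain {σ : ℕ} (k : ℕ) (v : List ℕ)
    (hv : ∀ a ∈ v, 1 ≤ a ∧ a ≤ σ) (hl : v.length ≤ k + 1) (hc : ¬ v.IsChain (· ≥ ·)) :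
    v.Sublist (Bword σ k) := by
  induction k generalizing v with
  | zero =>
    match v, hl with
    | [], _ => simp
    | [a], _ => simp at hc
  | succ k ih =>
    match v, hv, hl, hc with
    | [], _, _, _ => simp
    | [a], _, _, hc => simp at hc
    | a :: b :: t, hv, hl, hc =>
      simp only [List.forall_mem_cons] at hv
      simp only [List.length_cons] at hl
      rw [Bword_succ]
      by_cases hab : a < b
      · exact (pair_sublist_ascWord hv.1.1 hab hv.2.1.2).append
          (sublist_Bword_of_length_le k t hv.2.2 (by omega))
      · rw [← List.singleton_append]
        refine (List.singleton_sublist.2 (mem_ascWord.2 hv.1)).append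
          (ih (b :: t) (by simpa only [List.forall_mem_cons] using hv.2)
            (by simp only [List.length_cons]; omega) ?_)
        intro h
        exact hc (List.isChain_cons_cons.2 ⟨not_lt.1 hab, h⟩)

/-- A non-increasing word meets each strictly increasing block in at most one letter. -/
lemma length_le_of_isChain_ge {σ : ℕ} (k : ℕ) (v : List ℕ)
    (hc : v.IsChain (· ≥ ·)) (h : v.Sublist (Bword σ k)) : v.length ≤ k := by
  induction k generalizing v with
  | zero => simpa [Bword] using h
  | succ k ih =>
    rw [Bword_succ, List.sublist_append_iff] at h
    obtain ⟨l₁, l₂, rfl, h₁, h₂⟩ := h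
    have hl₂ := ih l₂ hc.right_of_append h₂
    have hinc := (pairwise_ascWord σ).sublist h₁
    have hdec := hc.left_of_append
    have hl₁ : l₁.length ≤ 1 := by
      match l₁, hinc, hdec with
      | [], _, _ => simp
      | [a], _, _ => simp
      | a :: b :: t, hinc, hdec =>
        have h1 : a < b := List.rel_of_pairwise_cons hinc (by simp)
        have h2 : a ≥ b := (List.isChain_cons_cons.1 hdec).1
        omega
    rw [List.length_append]
    omega

lemma isChain_ge_iff_getD {k : ℕ} {v : List ℕ} (hl : v.length = k + 1) :
    v.IsChain (· ≥ ·) ↔ ∀ i, 1 ≤ i → i ≤ k → v.getD (i - 1) 0 ≥ v.getD i 0 := by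
  rw [List.isChain_iff_getElem]
  constructor
  · intro h i h1 h2
    obtain ⟨j, rfl⟩ := Nat.exists_eq_add_of_le' h1
    have := h j (by omega)
    rwa [Nat.add_sub_cancel, List.getD_eq_getElem _ _ (by omega),
      List.getD_eq_getElem _ _ (by omega)]
  · intro h i hi
    have := h (i + 1) (by omega) (by omega)
    rwa [Nat.add_sub_cancel, List.getD_eq_getElem _ _ (by omega),
      List.getD_eq_getElem _ _ (by omega)] at this

/-- A word `v` over `Σ = {1,…,σ}` is an SAS of `B_k` iff `v` is a non-increasing sequence
of length `k+1` (1-based: `v[i] ≥ v[i+1]` for all `1 ≤ i ≤ k`). -/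
theorem sas_Bword_iff_nonincreasing (σ k : ℕ) (hσ : 2 ≤ σ) (hk : 1 ≤ k)
    (v : List ℕ) (hv : ∀ a ∈ v, a ∈ Finset.Icc 1 σ) :
    IsSAS (Bword σ k) v ↔
      v.length = k + 1 ∧ ∀ i, 1 ≤ i → i ≤ k → v.getD (i - 1) 0 ≥ v.getD i 0 := by
  have hv' : ∀ a ∈ v, 1 ≤ a ∧ a ≤ σ := fun a ha => Finset.mem_Icc.1 (hv a ha)
  constructor
  · rintro ⟨-, habs, hmin⟩
    -- The constant word `1^(k+1)` is absent, which bounds the length of `v` from above.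
    have hle : v.length ≤ k + 1 := by
      have := hmin (List.replicate (k + 1) 1)
        (fun a ha => by
          rw [List.eq_of_mem_replicate ha, mem_Bword hk]
          omega)
        (fun h => by
          have := length_le_of_isChain_ge k _ (List.isChain_replicate_of_rel _ le_rfl) h
          simp at this)
      simpa using this
    have hlt : k < v.length := by
      by_contra hcon
      exact habs (sublist_Bword_of_length_le k v hv' (by omega))
    have hl : v.length = k + 1 := by omega
    refine ⟨hl, (isChain_ge_iff_getD hl).1 ?_⟩
    by_contra hc
    exact habs (sublist_Bword_of_not_isChain k v hv' hle hc)
  · rintro ⟨hl, h⟩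
    refine ⟨fun a ha => (mem_Bword hk).2 (hv' a ha), fun hs => ?_, fun u hu hs => ?_⟩
    · have := length_le_of_isChain_ge k v ((isChain_ge_iff_getD hl).2 h) hs
      omega
    · by_contra hcon
      exact hs (sublist_Bword_of_length_le k u (fun a ha => (mem_Bword hk).1 (hu a ha))
        (by omega))
end

section
/- Let Σ = {1,…,σ} and let A_k be defined by A_{2k−1} = ((1·2···σ)(σ·(σ−1)···1))^{k−1}(1·2···σ) and A_{2k} = A_{2k−1}·(σ·(σ−1)···1). Then the set of minimal absent subsequences of A_k equals the set of shortest absent subsequences of A_k: mas(A_k) = sas(A_k). -/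
/-- The word `v₂ = σ·(σ−1)···1`. -/
def descWord (σ : ℕ) : List ℕ := (ascWord σ).reverse

/-- The word `A_k`: `A_{2k−1} = (v₁v₂)^{k−1}v₁` and `A_{2k} = A_{2k−1}·v₂`,
i.e. `k` alternating blocks `v₁, v₂, v₁, …` starting with `v₁`. -/
def Aword (σ k : ℕ) : List ℕ :=
  ((List.range k).map fun i => if i % 2 = 0 then ascWord σ else descWord σ).flatten

/-- `v` is a minimal absent subsequence (MAS) of `w`: `v` is a word over `alph(w)` which is
not a subsequence of `w`, but every proper subsequence of `v` is a subsequence of `w`. -/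
def IsMAS (w v : List ℕ) : Prop :=
  (∀ a ∈ v, a ∈ w) ∧ ¬ v.Sublist w ∧
    ∀ u : List ℕ, u.Sublist v → u ≠ v → u.Sublist w

/-- The word `L · Lᴿ · L · Lᴿ ⋯` with `k` alternating blocks. -/
def altWord : ℕ → List ℕ → List ℕ
  | 0, _ => []
  | k + 1, L => L ++ altWord k L.reverse

theorem altWord_eq_flatten (k : ℕ) (L : List ℕ) :
    altWord k L =
      ((List.range k).map fun i => if i % 2 = 0 then L else L.reverse).flatten := by
  induction k generalizing L with
  | zero => simp [altWord]
  | succ k ih =>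
    rw [altWord, ih, List.range_succ_eq_map]
    simp only [List.map_cons, List.map_map, List.flatten_cons, Nat.zero_mod, if_true,
      List.reverse_reverse]
    congr 2
    apply List.map_congr_left
    intro i _
    simp only [Function.comp]
    rcases Nat.mod_two_eq_zero_or_one i with h | h
    · rw [if_pos h, if_neg (by omega)]
    · rw [if_neg (by omega), if_pos (by omega)]

theorem Aword_eq_altWord (σ k : ℕ) : Aword σ k = altWord k (ascWord σ) := by
  rw [altWord_eq_flatten]; rfl

theorem mem_of_mem_altWord {k : ℕ} {L : List ℕ} {a : ℕ} (h : a ∈ altWord k L) : a ∈ L := by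
  induction k generalizing L with
  | zero => simp [altWord] at h
  | succ k ih =>
    rw [altWord, List.mem_append] at h
    rcases h with h | h
    · exact h
    · simpa using ih h

theorem sublist_altWord_of_length_le {k : ℕ} {L u : List ℕ} (hu : ∀ a ∈ u, a ∈ L)
    (hlen : u.length ≤ k) : u.Sublist (altWord k L) := by
  induction k generalizing L u with
  | zero =>
    rw [List.length_eq_zero_iff.mp (Nat.le_zero.mp hlen)]
    exact List.nil_sublist _
  | succ k ih =>
    cases u with
    | nil => exact List.nil_sublist _
    | cons a u =>
      have h1 : [a].Sublist L := List.singleton_sublist.mpr (hu a (by simp))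
      have h2 : u.Sublist (altWord k L.reverse) :=
        ih (fun b hb => by simpa using hu b (by simp [hb])) (by simpa using hlen)
      exact h1.append h2

/-- If `y` does not come after `x` in the block `L`, then an embedding of `x y ⋯` into `L · M`
places everything from `y` on inside `M`. -/
theorem tail_sublist_of_not_pair {x y : ℕ} {u L M : List ℕ} (hxy : ¬ [x, y].Sublist L)
    (h : (x :: y :: u).Sublist (L ++ M)) : (y :: u).Sublist M := by
  obtain ⟨s, t, hst, hs, ht⟩ := List.sublist_append_iff.mp h
  match s, hst, hs with
  | [], hst, _ =>
    rw [List.nil_append] at hst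
    exact (List.sublist_cons_self x (y :: u)).trans (hst ▸ ht)
  | [a], hst, _ =>
    obtain ⟨_, h2⟩ := List.cons_eq_cons.mp hst
    exact (show y :: u = t from h2) ▸ ht
  | a :: b :: s', hst, hs =>
    simp only [List.cons_append, List.cons.injEq] at hst
    obtain ⟨rfl, rfl, _⟩ := hst
    exact absurd (((List.nil_sublist s').cons_cons y).cons_cons x |>.trans hs) hxy

theorem exists_split_of_pair {x y : ℕ} {L : List ℕ} (hL : L.Nodup) (h : [x, y].Sublist L) :
    ∃ P Q, L = P ++ y :: Q ∧ x ∈ P ∧ y ∉ P ∧ y ∉ Q := by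
  obtain ⟨P', Q', rfl, hx, hy⟩ := List.append_sublist_iff.mp (show ([x] ++ [y]).Sublist L from h)
  obtain ⟨R, Q, rfl⟩ := List.append_of_mem (List.singleton_sublist.mp hy)
  rw [← List.append_assoc] at hL
  have hL' := List.nodup_middle.mp hL
  simp only [List.nodup_cons, List.mem_append] at hL'
  refine ⟨P' ++ R, Q, by simp, ?_, ?_, ?_⟩
  · simp [List.singleton_sublist.mp hx]
  · simp only [List.mem_append]; tauto
  · tauto

/-- If a list has no `y` in its prefix `P`, then words starting with `y` embed after `P`. -/
theorem sublist_of_append_of_notMem {y : ℕ} {u P M : List ℕ} (hy : y ∉ P)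
    (h : (y :: u).Sublist (P ++ M)) : (y :: u).Sublist M := by
  induction P with
  | nil => exact h
  | cons p P ih =>
    simp only [List.mem_cons, not_or] at hy
    rw [List.cons_append] at h
    cases h with
    | cons _ h => exact ih hy.2 h
    | cons_cons _ h => exact absurd rfl hy.1

/-- If `x` precedes `y` in the first block, it can be put in front of any word starting with `y`
without destroying embeddability. -/
theorem cons_sublist_of_pair {x y : ℕ} {u L M : List ℕ} (hL : L.Nodup)
    (hxy : [x, y].Sublist L) (h : (y :: u).Sublist (L ++ M)) :
    (x :: y :: u).Sublist (L ++ M) := by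
  obtain ⟨P, Q, rfl, hx, hyP, _⟩ := exists_split_of_pair hL hxy
  rw [List.append_assoc] at h ⊢
  exact (List.singleton_sublist.mpr hx).append (sublist_of_append_of_notMem hyP h)

theorem pair_trans {x z y : ℕ} {L : List ℕ} (hL : L.Nodup) (h1 : [x, z].Sublist L)
    (h2 : [z, y].Sublist L) : [x, y].Sublist L := by
  obtain ⟨P, Q, rfl, hx, hzP, hzQ⟩ := exists_split_of_pair hL h1
  have h3 : [z, y].Sublist (z :: Q) := sublist_of_append_of_notMem hzP h2
  have hy : [y].Sublist (z :: Q) := (List.cons_sublist_cons.mp h3).cons z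
  exact (List.singleton_sublist.mpr hx).append hy

/-- The induction bounding the length of minimal absent subsequences. The hypotheses are weaker
than minimality of `x :: v`, so as to pass to the tail: only deletions that keep the first letter
are assumed to embed, and the second letter must not follow the first one within `L`. -/
theorem length_le_of_absent {k : ℕ} {L : List ℕ} (hL : L.Nodup) {x : ℕ} {v : List ℕ}
    (hmem : ∀ a ∈ x :: v, a ∈ L) (habs : ¬ (x :: v).Sublist (altWord k L))
    (hdel : ∀ u : List ℕ, u.Sublist v → u ≠ v → (x :: u).Sublist (altWord k L))
    (hsnd : ∀ y u, v = y :: u → ¬ [x, y].Sublist L) :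
    v.length ≤ k := by
  induction k generalizing L x v with
  | zero =>
    cases v with
    | nil => simp
    | cons y u =>
      have := hdel [] (List.nil_sublist _) (by simp)
      simp [altWord] at this
  | succ k ih =>
    cases v with
    | nil => simp
    | cons y u =>
      have hxy := hsnd y u rfl
      have hxL : [x].Sublist L := List.singleton_sublist.mpr (hmem x (by simp))
      have habs' : ¬ (y :: u).Sublist (altWord k L.reverse) := fun h =>
        habs (hxL.append h)
      have hlen : u.length ≤ k := by
        refine ih (List.nodup_reverse.mpr hL) ?_ habs' ?_ ?_
        · intro a ha
          simpa using hmem a (List.mem_cons_of_mem x ha)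
        · intro w hw hne
          exact tail_sublist_of_not_pair hxy (hdel (y :: w) (hw.cons_cons y) (by simpa using hne))
        · rintro z w rfl hyz
          have hzy : [z, y].Sublist L := by
            have := hyz.reverse
            simpa using this
          have hxz : ¬ [x, z].Sublist L := fun h => hxy (pair_trans hL h hzy)
          -- Deleting `y` keeps the word embeddable, with `z` then falling in the second block.
          have hz : (z :: w).Sublist (altWord k L.reverse) :=
            tail_sublist_of_not_pair hxz
              (hdel (z :: w) (List.sublist_cons_self _ _) (by
                intro h; simpa using congrArg List.length h))
          cases k with
          | zero => simp [altWord] at hz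
          | succ k => exact habs' (cons_sublist_of_pair (List.nodup_reverse.mpr hL) hyz hz)
      simpa using hlen

theorem length_le_of_isMAS {k : ℕ} {L v : List ℕ} (hL : L.Nodup)
    (h : IsMAS (altWord k L) v) : v.length ≤ k + 1 := by
  obtain ⟨hmem, habs, hdel⟩ := h
  cases v with
  | nil => simp
  | cons x v =>
    have hlen : v.length ≤ k := by
      refine length_le_of_absent hL (fun a ha => mem_of_mem_altWord (hmem a ha)) habs ?_ ?_
      · intro u hu hne
        exact hdel _ (hu.cons_cons x) (by simpa using hne)
      · rintro y u rfl hxy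
        have hy := hdel (y :: u) (List.sublist_cons_self _ _) (by
          intro h; simpa using congrArg List.length h)
        cases k with
        | zero => simp [altWord] at hy
        | succ k => exact habs (cons_sublist_of_pair hL hxy hy)
    simpa using hlen

theorem IsSAS.isMAS {w v : List ℕ} (h : IsSAS w v) : IsMAS w v := by
  refine ⟨h.1, h.2.1, fun u hu hne => ?_⟩
  by_contra habs
  exact hne (hu.eq_of_length_le (h.2.2 u (fun a ha => h.1 a (hu.subset ha)) habs))

theorem nodup_ascWord (σ : ℕ) : (ascWord σ).Nodup :=
  List.nodup_range.map (add_left_injective 1)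

/-- Proposition 3.7: `mas(A_k) = sas(A_k)`. -/
theorem mas_eq_sas_Aword (σ k : ℕ) (hσ : 2 ≤ σ) (hk : 1 ≤ k) :
    {v : List ℕ | IsMAS (Aword σ k) v} = {v : List ℕ | IsSAS (Aword σ k) v} := by
  ext v
  refine ⟨fun h => ?_, fun h => IsSAS.isMAS h⟩
  simp only [Set.mem_ofPred_eq, Aword_eq_altWord] at h ⊢
  refine ⟨h.1, h.2.1, fun u hu habs => ?_⟩
  refine (length_le_of_isMAS (nodup_ascWord σ) h).trans ?_
  by_contra hlt
  exact habs (sublist_altWord_of_length_le (fun a ha => mem_of_mem_altWord (hu a ha)) (by omega))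
end

section
/- Let Σ = {1,…,σ} with σ ≥ 2 even, and let A_k be as defined. Then the number of shortest absent subsequences of A_k satisfies |sas(A_k)| ≥ (σ/2)^k; in particular, |sas(A_k)| is exponential in |A_k| for fixed σ, since |sas(A_k)| ≥ (σ/2)^{|A_k|/σ}. -/
/-- The alternating product of `k` arches, starting with the increasing arch when `b = true` and
with the decreasing one when `b = false`. -/
def archWord (σ : ℕ) : Bool → ℕ → List ℕ
  | _, 0 => []
  | b, k + 1 => (if b then ascWord σ else descWord σ) ++ archWord σ (!b) k

/-- The words of length `n` whose letters lie alternately in the upper half `{h+1,…,2h}` and the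
lower half `{1,…,h}` of the alphabet `{1,…,2h}`, starting in the upper half iff `b = true`. -/
def zigzag (h : ℕ) : Bool → ℕ → Finset (List ℕ)
  | _, 0 => {[]}
  | b, n + 1 =>
    ((if b then Finset.Icc (h + 1) (2 * h) else Finset.Icc 1 h) ×ˢ zigzag h (!b) n).image
      fun p => p.1 :: p.2

lemma mem_descWord {σ a : ℕ} : a ∈ descWord σ ↔ 1 ≤ a ∧ a ≤ σ := by
  rw [descWord, List.mem_reverse, mem_ascWord]

lemma pairwise_descWord (σ : ℕ) : (descWord σ).Pairwise (· > ·) := by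
  rw [descWord, List.pairwise_reverse]
  exact pairwise_ascWord σ

/-- The parity shift between `i` and `i + c` lets the induction peel off the first arch. -/
lemma flatten_eq_archWord (σ k : ℕ) : ∀ c : ℕ,
    ((List.range k).map fun i => if (i + c) % 2 = 0 then ascWord σ else descWord σ).flatten
      = archWord σ (decide (c % 2 = 0)) k := by
  induction k with
  | zero => intro c; simp [archWord]
  | succ k ih =>
    intro c
    have hb : (!decide (c % 2 = 0)) = decide ((c + 1) % 2 = 0) := by
      rcases Nat.mod_two_eq_zero_or_one c with h | h
      · have : (c + 1) % 2 = 1 := by omega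
        simp [h, this]
      · have : (c + 1) % 2 = 0 := by omega
        simp [h, this]
    rw [archWord, hb, ← ih (c + 1), List.range_succ_eq_map, List.map_cons, List.flatten_cons,
      List.map_map]
    congr 1
    · simp
    · congr 2
      funext i
      simp only [Function.comp, Nat.succ_eq_add_one, Nat.add_assoc, Nat.add_comm 1 c]

lemma Aword_eq_archWord (σ k : ℕ) : Aword σ k = archWord σ true k :=
  flatten_eq_archWord σ k 0

lemma length_archWord (σ k : ℕ) : ∀ b, (archWord σ b k).length = k * σ := by
  induction k with
  | zero => intro b; simp [archWord]
  | succ k ih =>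
    intro b
    cases b <;> simp [archWord, ih, ascWord, descWord] <;> ring

lemma mem_of_mem_archWord {σ a k : ℕ} : ∀ b, a ∈ archWord σ b k → 1 ≤ a ∧ a ≤ σ := by
  induction k with
  | zero => intro b; simp [archWord]
  | succ k ih =>
    intro b hab
    rw [archWord, List.mem_append] at hab
    rcases hab with hab | hab
    · cases b
      · exact mem_descWord.1 hab
      · exact mem_ascWord.1 hab
    · exact ih _ hab

/-- `archWord σ b k` is `k`-universal. -/
lemma sublist_archWord {σ : ℕ} (k : ℕ) : ∀ (b : Bool) (u : List ℕ),
    (∀ a ∈ u, 1 ≤ a ∧ a ≤ σ) → u.length ≤ k → u.Sublist (archWord σ b k) := by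
  induction k with
  | zero =>
    intro b u _ hl
    rw [List.length_eq_zero_iff.1 (Nat.le_zero.1 hl)]
    exact List.nil_sublist _
  | succ k ih =>
    intro b u hu hl
    cases u with
    | nil => exact List.nil_sublist _
    | cons x t =>
      have hx := hu x (by simp)
      have ht := ih (!b) t (fun a ha => hu a (by simp [ha])) (by simpa using hl)
      have h1 : [x].Sublist (if b then ascWord σ else descWord σ) := by
        rw [List.singleton_sublist]
        cases b
        · exact mem_descWord.2 hx
        · exact mem_ascWord.2 hx
      exact h1.append ht

lemma card_zigzag (h n : ℕ) : ∀ b, (zigzag h b n).card = h ^ n := by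
  induction n with
  | zero => intro b; simp [zigzag]
  | succ n ih =>
    intro b
    rw [zigzag, Finset.card_image_of_injective, Finset.card_product, ih, pow_succ']
    · congr 1
      cases b <;> simp
      omega
    · rintro ⟨a, s⟩ ⟨a', s'⟩ hs
      simpa using hs

lemma mem_zigzag_succ {h n : ℕ} {b : Bool} {v : List ℕ} :
    v ∈ zigzag h b (n + 1) ↔ ∃ x t, v = x :: t ∧ t ∈ zigzag h (!b) n ∧
      x ∈ (if b then Finset.Icc (h + 1) (2 * h) else Finset.Icc 1 h) := by
  simp only [zigzag, Finset.mem_image, Finset.mem_product, Prod.exists]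
  constructor
  · rintro ⟨x, t, ⟨hx, ht⟩, rfl⟩
    exact ⟨x, t, rfl, ht, hx⟩
  · rintro ⟨x, t, rfl, ht, hx⟩
    exact ⟨x, t, ⟨hx, ht⟩, rfl⟩

lemma zigzag_spec {h n : ℕ} : ∀ b, ∀ v ∈ zigzag h b n,
    v.length = n ∧ ∀ a ∈ v, 1 ≤ a ∧ a ≤ 2 * h := by
  induction n with
  | zero => intro b v hv; simp_all [zigzag]
  | succ n ih =>
    intro b v hv
    obtain ⟨x, t, rfl, ht, hx⟩ := mem_zigzag_succ.1 hv
    obtain ⟨hl, ha⟩ := ih _ t ht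
    refine ⟨by simp [hl], ?_⟩
    intro a hmem
    rcases List.mem_cons.1 hmem with rfl | hmem
    · cases b <;> simp at hx <;> omega
    · exact ha a hmem

/-- A word starting in the upper (lower) half cannot place its first two letters in an increasing
(decreasing) arch, so each of the `k` arches absorbs at most one of the `k + 1` letters. -/
lemma not_sublist_of_mem_zigzag {σ h : ℕ} (k : ℕ) : ∀ b, ∀ v ∈ zigzag h b (k + 1),
    ¬ v.Sublist (archWord σ b k) := by
  induction k with
  | zero =>
    intro b v hv hs
    obtain ⟨x, t, rfl, -, -⟩ := mem_zigzag_succ.1 hv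
    simp [archWord] at hs
  | succ k ih =>
    intro b v hv hs
    obtain ⟨x, t, rfl, ht, hx⟩ := mem_zigzag_succ.1 hv
    obtain ⟨y, t', rfl, -, hy⟩ := mem_zigzag_succ.1 ht
    rw [archWord, List.sublist_append_iff] at hs
    obtain ⟨l₁, l₂, heq, h₁, h₂⟩ := hs
    -- `l₁` is the part of the word embedded in the first arch.
    match l₁, heq, h₁ with
    | [], heq, _ =>
      simp only [List.nil_append] at heq
      subst heq
      exact ih _ _ ht ((List.sublist_cons_self _ _).trans h₂)
    | [_], heq, _ =>
      simp only [List.cons_append, List.nil_append, List.cons.injEq] at heq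
      rw [← heq.2] at h₂
      exact ih _ _ ht h₂
    | x' :: y' :: r, heq, h₁ =>
      simp only [List.cons_append, List.cons.injEq] at heq
      obtain ⟨rfl, rfl, -⟩ := heq
      cases b
      · have := (pairwise_descWord σ).sublist h₁
        simp at this hx hy
        omega
      · have := (pairwise_ascWord σ).sublist h₁
        simp at this hx hy
        omega

/-- Proposition 3.9: `|sas(A_k)| ≥ (σ/2)^k`; in particular, since `|A_k| = kσ`,
`|sas(A_k)| ≥ (σ/2)^{|A_k|/σ}`, which is exponential in `|A_k|` for fixed `σ`. -/
theorem card_sas_Aword_lower_bound (σ k : ℕ) (hσ : 2 ≤ σ) (heven : Even σ) (hk : 1 ≤ k) :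
    (σ / 2) ^ k ≤ Set.ncard {v : List ℕ | IsSAS (Aword σ k) v} ∧
      (σ / 2) ^ ((Aword σ k).length / σ) ≤ Set.ncard {v : List ℕ | IsSAS (Aword σ k) v} := by
  have hlen : (Aword σ k).length / σ = k := by
    rw [Aword_eq_archWord, length_archWord, Nat.mul_div_cancel _ (by omega)]
  rw [hlen, and_self, Aword_eq_archWord]
  obtain ⟨h, rfl⟩ : ∃ h, σ = 2 * h := by
    obtain ⟨h, rfl⟩ := heven
    exact ⟨h, by ring⟩
  rw [Nat.mul_div_cancel_left h two_pos]
  have hmem : ∀ a, a ∈ archWord (2 * h) true k ↔ 1 ≤ a ∧ a ≤ 2 * h := fun a =>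
    ⟨mem_of_mem_archWord _, fun ha => by
      simpa using sublist_archWord k true [a] (by simpa using ha) (by simpa using hk)⟩
  have hsub : (zigzag h true (k + 1) : Set (List ℕ)) ⊆
      {v | IsSAS (archWord (2 * h) true k) v} := by
    intro v hv
    obtain ⟨hl, ha⟩ := zigzag_spec _ v hv
    refine ⟨fun a h' => (hmem a).2 (ha a h'), not_sublist_of_mem_zigzag k _ v hv, ?_⟩
    intro u hu hnu
    by_contra hlt
    exact hnu (sublist_archWord k _ u (fun a h' => (hmem a).1 (hu a h')) (by omega))
  have hcard := card_zigzag h (k + 1) true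
  have hpos : 0 < h := by omega
  -- Every SAS has length at most `k + 1`, hence is a subsequence of the word with `k + 1` arches.
  -- Finiteness matters because `Set.ncard` of an infinite set is `0`.
  have hfin : {v | IsSAS (archWord (2 * h) true k) v}.Finite := by
    refine (List.finite_toSet (archWord (2 * h) true (k + 1)).sublists).subset ?_
    rintro v ⟨hv, -, hmin⟩
    obtain ⟨w, hw⟩ : (zigzag h true (k + 1)).Nonempty := by
      rw [← Finset.card_pos, hcard]
      positivity
    obtain ⟨hwa, hwn, -⟩ := hsub hw
    have hle := hmin w hwa hwn
    rw [(zigzag_spec _ w hw).1] at hle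
    exact List.mem_sublists.2
      (sublist_archWord (k + 1) _ v (fun a h' => (hmem a).1 (hv a h')) hle)
  calc h ^ k ≤ h ^ (k + 1) := Nat.pow_le_pow_right hpos (by omega)
    _ = (zigzag h true (k + 1) : Set (List ℕ)).ncard := by rw [Set.ncard_coe_finset, hcard]
    _ ≤ _ := Set.ncard_le_ncard hsub hfin
end
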